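/- For every positive integer p there exists a constant c_p ≥ 1, depending only on p, with the following property. Let 𝒰 be a doubling covering, with charts ψ̃_j : B₄ ⊆ ℂⁿ → ℂ^N analytic and injective with images in Y ⊆ ℂ^N, of a compact set G ⊆ Y; let f : Y → ℂ be such that f ∘ ψ̃_j is analytic and sectionally p-valent on B₄ for every chart; let Ω ⊆ G be compact; and let 0 < ρ ≤ 1 and a positive integer ℓ(𝒰) ≤ κ(𝒰) be such that every point z ∈ G is contained in the last chart of some chain of at most ℓ(𝒰) charts of 𝒰 whose first chart U_{j₁} satisfies ρ(U_{j₁}, Ω) ≥ ρ and in which every pair of consecutive charts has intersection radius at least ρ. Then sup_G |f| ≤ (c_p/ρ^p)^{ℓ(𝒰)} · sup_Ω |f| ≤ (c_p/ρ^p)^{κ(𝒰)} · sup_Ω |f|. -/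

import Mathlib

open Metric Set

noncomputable section

/-- A doubling covering of `G` in `Y ⊆ ℂ^N`, with charts given by analytic injective maps
`ψ̃_j` defined on an open neighborhood of the closed ball `B̄₄ ⊆ ℂᵏ`, with images in `Y`,
such that the charts `U_j = ψ̃_j(B₁)` cover `G`. -/
structure DoublingCovering (k N : ℕ) (G Y : Set (EuclideanSpace ℂ (Fin N))) where
  /-- the number of charts `κ(𝒰)` -/
  kappa : ℕ
  /-- the chart maps -/
  psi : Fin kappa → EuclideanSpace ℂ (Fin k) → EuclideanSpace ℂ (Fin N)
  /-- the open neighborhoods of `B̄₄` on which the chart maps are analytic and injective -/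
  dom : Fin kappa → Set (EuclideanSpace ℂ (Fin k))
  dom_open : ∀ j, IsOpen (dom j)
  dom_superset : ∀ j, closedBall (0 : EuclideanSpace ℂ (Fin k)) 4 ⊆ dom j
  analytic : ∀ j, AnalyticOnNhd ℂ (psi j) (dom j)
  injOn : ∀ j, Set.InjOn (psi j) (dom j)
  mapsTo : ∀ j, Set.MapsTo (psi j) (dom j) Y
  covers : G ⊆ ⋃ j, psi j '' ball (0 : EuclideanSpace ℂ (Fin k)) 1

namespace DoublingCovering

variable {k N : ℕ} {G Y : Set (EuclideanSpace ℂ (Fin N))}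

/-- The chart `U_j = ψ̃_j(B₁)`. -/
def chart (U : DoublingCovering k N G Y) (j : Fin U.kappa) :
    Set (EuclideanSpace ℂ (Fin N)) :=
  U.psi j '' ball 0 1

/-- `ψ̃_j⁻¹(U_j ∩ S)` (the preimage taken inside `B₁`) contains a ball of radius `ρ`. -/
def RadGe (U : DoublingCovering k N G Y) (j : Fin U.kappa)
    (S : Set (EuclideanSpace ℂ (Fin N))) (ρ : ℝ) : Prop :=
  ∃ c : EuclideanSpace ℂ (Fin k),
    ball c ρ ⊆ {x ∈ ball (0 : EuclideanSpace ℂ (Fin k)) 1 | U.psi j x ∈ U.chart j ∩ S}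

/-- The intersection radius `ρ(U_i, U_j)` of two charts is at least `ρ`. -/
def InterGe (U : DoublingCovering k N G Y) (i j : Fin U.kappa) (ρ : ℝ) : Prop :=
  U.RadGe i (U.chart j) ρ ∧ U.RadGe j (U.chart i) ρ

/-- A chain of at most `L` pairwise distinct charts whose first chart satisfies
`ρ(U_{j₁}, Ω) ≥ ρ`, whose consecutive intersection radii are at least `ρ` (in particular
consecutive charts intersect), and whose last chart contains `z`. -/
def ChainFrom (U : DoublingCovering k N G Y) (Ω : Set (EuclideanSpace ℂ (Fin N)))
    (ρ : ℝ) (L : ℕ) (z : EuclideanSpace ℂ (Fin N)) : Prop :=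
  ∃ (l : ℕ) (hl : 0 < l) (js : Fin l → Fin U.kappa), l ≤ L ∧ Function.Injective js ∧
    U.RadGe (js ⟨0, hl⟩) Ω ρ ∧
    (∀ m : ℕ, (h : m + 1 < l) → U.InterGe (js ⟨m, by omega⟩) (js ⟨m + 1, h⟩) ρ) ∧
    z ∈ U.chart (js ⟨l - 1, by omega⟩)

end DoublingCovering

/-- `f` is sectionally `p`-valent in `W ⊆ ℂⁿ`: on every complex affine line
`L = {a + t·b : t ∈ ℂ}` (with `b ≠ 0`) and every `c ∈ ℂ`, the equation `f = c` has at most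
`p` solutions on `L ∩ W`. -/
def SectionallyPValentOn {n : ℕ} (f : EuclideanSpace ℂ (Fin n) → ℂ)
    (W : Set (EuclideanSpace ℂ (Fin n))) (p : ℕ) : Prop :=
  ∀ a b : EuclideanSpace ℂ (Fin n), b ≠ 0 → ∀ c : ℂ, ∀ s : Finset ℂ,
    (∀ t ∈ s, a + t • b ∈ W ∧ f (a + t • b) = c) → s.card ≤ p

/-! Let `h` be `p`-valent on a disk of radius `R` and bounded by `1 / 2` on the concentric disk of
radius `r`. For `‖a‖ = 1` the function `h - a` is bounded away from `0` on the small disk and has at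
most `p` zeros on the large one, all simple unless `a` is one of finitely many critical values, so
by Jensen's formula its logarithmic mean over the large circle is at most
`log 2 + p log (R / r)`. Averaging over `a` (Cartan) turns `log ‖h - a‖` into
`log⁺ ‖h‖`, and the Poisson–Jensen formula turns the bound on the mean into a pointwise one.

Doing this once from radius `ρ` to radius `2` would cost a power of `ρ ^ (-p)` through the Harnack
constant. Instead, growth from radius `1` to radius `2` costs a factor depending only on `p`; then
the maximum over the unit disk is compared with the logarithmic mean over the circle of radius `2`,
and it is this mean that is bounded from the disk of radius `ρ`. After normalising by the maximum
over the large disk `log ‖h‖` is nonpositive, so the Harnack constant now multiplies only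
quantities independent of `ρ`.

In several variables the estimate is applied on the complex line through the center of the small
ball and the given point, and it is iterated along a chain of charts. -/

section PValentFunctions

open MeasureTheory Real Filter

section CartanAveraging

theorem circleAverage_abs_log_norm_sub_le (z : ℂ) :
    circleAverage (fun a ↦ |log ‖z - a‖|) 0 1 ≤ 2 * (log⁺ ‖z‖ + log 2) := by
  have hlog : CircleIntegrable (fun a ↦ log ‖z - a‖) 0 1 := by
    simpa only [norm_sub_rev z] using circleIntegrable_log_norm_sub_const (a := z) (c := 0) 1
  have habs : ∀ a ∈ sphere (0 : ℂ) |1|,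
      |log ‖z - a‖| ≤ 2 * (log⁺ ‖z‖ + log 2) - log ‖z - a‖ := by
    intro a ha
    have hsub : log⁺ ‖z - a‖ ≤ log⁺ ‖z‖ + log 2 := by
      simpa [sub_eq_add_neg, mem_sphere_zero_iff_norm.mp ha] using posLog_norm_add_le z (-a)
    have hle : log ‖z - a‖ ≤ log⁺ ‖z - a‖ := le_max_right _ _
    have hnonneg : 0 ≤ log⁺ ‖z - a‖ := posLog_nonneg
    exact abs_le.mpr ⟨by linarith, by linarith⟩
  calc circleAverage (fun a ↦ |log ‖z - a‖|) 0 1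
      ≤ circleAverage (fun a ↦ 2 * (log⁺ ‖z‖ + log 2) - log ‖z - a‖) 0 1 :=
        circleAverage_mono hlog.abs ((circleIntegrable_const _ _ _).sub hlog) habs
    _ = 2 * (log⁺ ‖z‖ + log 2) - log⁺ ‖z‖ := by
        rw [circleAverage_fun_sub (circleIntegrable_const _ _ _) hlog, circleAverage_const]
        simp only [norm_sub_rev z, circleAverage_log_norm_sub_const_eq_posLog]
    _ ≤ 2 * (log⁺ ‖z‖ + log 2) := sub_le_self _ posLog_nonneg

variable {X : Type*} [MeasurableSpace X] {μ : Measure X} [IsFiniteMeasure μ] {F : X → ℂ}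

theorem integrable_log_norm_sub_circleMap (hF : Measurable F)
    (hlog : Integrable (fun x ↦ log⁺ ‖F x‖) μ) :
    Integrable (fun q : ℝ × X ↦ log ‖F q.2 - circleMap 0 1 q.1‖)
      ((volume.restrict (Ioc 0 (2 * π))).prod μ) := by
  have hmeas : Measurable fun q : ℝ × X ↦ log ‖F q.2 - circleMap 0 1 q.1‖ := by fun_prop
  refine (integrable_prod_iff' hmeas.aestronglyMeasurable).mpr ⟨.of_forall fun x ↦ ?_, ?_⟩
  · rw [← IntegrableOn, ← intervalIntegrable_iff_integrableOn_Ioc_of_le two_pi_pos.le]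
    simpa only [norm_sub_rev (F x), CircleIntegrable] using
      circleIntegrable_log_norm_sub_const (a := F x) (c := 0) 1
  · refine ((hlog.add (integrable_const (log 2))).const_mul (2 * π * 2)).mono'
      hmeas.norm.stronglyMeasurable.integral_prod_left'.aestronglyMeasurable
      (.of_forall fun x ↦ ?_)
    have havg := circleAverage_abs_log_norm_sub_le (F x)
    rw [circleAverage, intervalIntegral.integral_of_le two_pi_pos.le, smul_eq_mul,
      inv_mul_le_iff₀ two_pi_pos, ← mul_assoc] at havg
    rwa [norm_of_nonneg (by positivity)]

theorem circleIntegrable_integral_log_norm_sub (hF : Measurable F)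
    (hlog : Integrable (fun x ↦ log⁺ ‖F x‖) μ) :
    CircleIntegrable (fun a ↦ ∫ x, log ‖F x - a‖ ∂μ) 0 1 :=
  (intervalIntegrable_iff_integrableOn_Ioc_of_le two_pi_pos.le).mpr
    (integrable_log_norm_sub_circleMap hF hlog).integral_prod_left

theorem circleAverage_integral_log_norm_sub (hF : Measurable F)
    (hlog : Integrable (fun x ↦ log⁺ ‖F x‖) μ) :
    circleAverage (fun a ↦ ∫ x, log ‖F x - a‖ ∂μ) 0 1 = ∫ x, log⁺ ‖F x‖ ∂μ := by
  rw [circleAverage, intervalIntegral.integral_of_le two_pi_pos.le,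
    integral_integral_swap (integrable_log_norm_sub_circleMap hF hlog), ← integral_smul]
  refine integral_congr_ae (.of_forall fun x ↦ ?_)
  have := circleAverage_log_norm_sub_const_eq_posLog (a := F x)
  rw [circleAverage, intervalIntegral.integral_of_le two_pi_pos.le] at this
  simpa only [norm_sub_rev (F x)] using this

theorem integral_posLog_norm_le_of_integral_log_norm_sub_le (hF : Measurable F)
    (hlog : Integrable (fun x ↦ log⁺ ‖F x‖) μ) {S : Set ℂ} (hS : S.Countable) {C : ℝ}
    (hC : ∀ a, ‖a‖ = 1 → a ∉ S → ∫ x, log ‖F x - a‖ ∂μ ≤ C) :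
    ∫ x, log⁺ ‖F x‖ ∂μ ≤ C := by
  have hnotMem : ∀ᵐ α, circleMap 0 1 α ∉ S :=
    (hS.preimage_circleMap 0 one_ne_zero).ae_notMem volume
  calc ∫ x, log⁺ ‖F x‖ ∂μ
      = circleAverage (fun a ↦ ∫ x, log ‖F x - a‖ ∂μ) 0 1 :=
        (circleAverage_integral_log_norm_sub hF hlog).symm
    _ ≤ circleAverage (fun _ ↦ C) (0 : ℂ) 1 := by
        simp only [circleAverage, smul_eq_mul]
        gcongr
        refine intervalIntegral.integral_mono_ae two_pi_pos.le
          (circleIntegrable_integral_log_norm_sub hF hlog) (circleIntegrable_const C 0 1) ?_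
        filter_upwards [hnotMem] with α hα using hC _ (by simp) hα
    _ = C := circleAverage_const C 0 1

theorem circleAverage_posLog_norm_le_of_circleAverage_log_norm_sub_le {f : ℂ → ℂ} {c : ℂ} {R : ℝ}
    (hf : ContinuousOn f (sphere c |R|)) {S : Set ℂ} (hS : S.Countable) {C : ℝ}
    (hC : ∀ a, ‖a‖ = 1 → a ∉ S → circleAverage (fun z ↦ log ‖f z - a‖) c R ≤ C) :
    circleAverage (fun z ↦ log⁺ ‖f z‖) c R ≤ C := by
  have hF : Continuous (f ∘ circleMap c R) :=
    hf.comp_continuous (continuous_circleMap c R) (circleMap_mem_sphere' c R)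
  have hcirc : IntegrableOn (fun α ↦ log⁺ ‖(f ∘ circleMap c R) α‖) (Ioc 0 (2 * π)) :=
    (Real.continuous_posLog.comp hF.norm).integrableOn_Ioc
  simp only [circleAverage, intervalIntegral.integral_of_le two_pi_pos.le, smul_eq_mul,
    inv_mul_le_iff₀ two_pi_pos] at hC ⊢
  exact integral_posLog_norm_le_of_integral_log_norm_sub_le hF.measurable hcirc hS hC

end CartanAveraging

section PoissonJensen

open Complex (canonicalFactor)

variable {f : ℂ → ℂ} {R : ℝ} {w : ℂ}

theorem one_le_norm_canonicalFactor {a : ℂ} (ha : a ∈ ball 0 R) (hw : w ∈ ball 0 R)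
    (hne : w ≠ a) : 1 ≤ ‖canonicalFactor R a w‖ := by
  rw [mem_ball_zero_iff] at ha hw
  have hR : 0 < R := (norm_nonneg a).trans_lt ha
  have hdiff : ‖(R ^ 2 - starRingEnd ℂ a * w : ℂ)‖ ^ 2 - ‖(R * (w - a) : ℂ)‖ ^ 2 =
      (R ^ 2 - ‖w‖ ^ 2) * (R ^ 2 - ‖a‖ ^ 2) := by
    simp only [Complex.sq_norm, Complex.normSq_apply, Complex.sub_re, Complex.sub_im,
      Complex.mul_re, Complex.mul_im, Complex.conj_re, Complex.conj_im, Complex.ofReal_re,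
      Complex.ofReal_im]
    simp only [pow_two, Complex.mul_re, Complex.mul_im, Complex.ofReal_re, Complex.ofReal_im]
    ring
  have hpos : 0 ≤ (R ^ 2 - ‖w‖ ^ 2) * (R ^ 2 - ‖a‖ ^ 2) :=
    mul_nonneg (by nlinarith [norm_nonneg w]) (by nlinarith [norm_nonneg a])
  have hden : 0 < ‖(R * (w - a) : ℂ)‖ :=
    norm_pos_iff.mpr (mul_ne_zero (by exact_mod_cast hR.ne') (sub_ne_zero.mpr hne))
  rw [Complex.canonicalFactor_apply, norm_div, one_le_div hden]
  exact le_of_sq_le_sq (by linarith) (norm_nonneg _)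

theorem circleIntegrable_poissonKernel_smul {u : ℂ → ℝ} {c : ℂ} (hu : CircleIntegrable u c R)
    (hw : w ∈ ball c R) : CircleIntegrable (poissonKernel c w • u) c R := by
  rw [poissonKernel_eq_re_herglotzRieszKernel]
  exact hu.continuousOn_smul
    (Complex.continuous_re.comp_continuousOn (continuousOn_herglotzRieszKernel_sphere hw))

theorem eventually_codiscreteWithin_sphere_ne_zero {c : ℂ}
    (hf : AnalyticOnNhd ℂ f (closedBall c R)) {z : ℂ} (hz : z ∈ closedBall c R)
    (hfz : f z ≠ 0) :
    ∀ᶠ x in codiscreteWithin (sphere c R), x ∈ sphere c R ∧ f x ≠ 0 := by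
  filter_upwards [self_mem_codiscreteWithin _, codiscreteWithin_mono sphere_subset_closedBall
    (hf.preimage_zero_mem_codiscreteWithin hfz hz
      ((convex_closedBall c R).isConnected ⟨z, hz⟩))] with x hx hfx using ⟨hx, hfx⟩

theorem circleAverage_poissonKernel_smul_log_norm_sub {c a : ℂ} (ha : a ∈ sphere c R)
    (hw : w ∈ ball c R) :
    circleAverage (poissonKernel c w • fun z ↦ log ‖z - a‖) c R = log ‖w - a‖ := by
  rw [poissonKernel_eq_re_herglotzRieszKernel]
  exact circleAverage_re_herglotzRieszKernel_mul_log ha hw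

theorem circleAverage_poissonKernel_smul_finsum_mul_log_norm_sub {c : ℂ} {d : ℂ → ℝ}
    (hd : d.support.Finite) (hdR : d.support ⊆ sphere c R) (hw : w ∈ ball c R) :
    circleAverage (poissonKernel c w • fun z ↦ ∑ᶠ a, d a * log ‖z - a‖) c R =
      ∑ᶠ a, d a * log ‖w - a‖ := by
  have hsum (z : ℂ) : ∑ᶠ a, d a * log ‖z - a‖ = ∑ a ∈ hd.toFinset, d a * log ‖z - a‖ :=
    finsum_eq_sum_of_support_subset _ fun a ha ↦ by simpa using left_ne_zero_of_mul ha
  have hsmul : (poissonKernel c w • fun z ↦ ∑ᶠ a, d a * log ‖z - a‖) =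
      ∑ a ∈ hd.toFinset, d a • poissonKernel c w • fun z ↦ log ‖z - a‖ := by
    ext z
    simp [hsum, Finset.mul_sum, mul_left_comm]
  rw [hsmul, circleAverage_sum fun a _ ↦ (circleIntegrable_poissonKernel_smul
    (circleIntegrable_log_norm_sub_const R) hw).const_smul, hsum]
  refine Finset.sum_congr rfl fun a ha ↦ ?_
  rw [circleAverage_smul, circleAverage_poissonKernel_smul_log_norm_sub
    (hdR (by simpa using ha)) hw, smul_eq_mul]

theorem exists_ecanonicalDecomp_of_ne_zero (hf : AnalyticOnNhd ℂ f (closedBall 0 R))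
    (hw : w ∈ closedBall 0 R) (hfw : f w ≠ 0) :
    ∃ g, Complex.ECanonicalDecomp f g R := by
  refine hf.meromorphicOn.exists_ecanonicalDecomp fun u ↦
    hf.meromorphicOn.meromorphicOrderAt_ne_top_of_isPreconnected
      (convex_closedBall 0 R).isPreconnected hw u.2 ?_
  rw [(hf w hw).meromorphicNFAt.meromorphicOrderAt_eq_zero_iff.mpr hfw]
  exact WithTop.zero_ne_top

theorem log_norm_ecanonicalDecomp {g : ℂ → ℂ} (hf : AnalyticOnNhd ℂ f (closedBall 0 R))
    (hg : Complex.ECanonicalDecomp f g R) (hR : 0 < R) (hw : w ∈ closedBall 0 R) (hfw : f w ≠ 0) :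
    log ‖g w‖ = ∑ᶠ a, MeromorphicOn.divisor f (ball 0 R) a * log ‖canonicalFactor R a w‖ -
      ∑ᶠ a, MeromorphicOn.divisor f (sphere 0 R) a * log ‖w - a‖ + log ‖f w‖ := by
  rw [hg.log_norm_eq hw ((hf w hw).meromorphicNFAt.meromorphicOrderAt_eq_zero_iff.mpr hfw) hR,
    (hf w hw).meromorphicTrailingCoeffAt_of_ne_zero hfw]

theorem eventually_codiscreteWithin_sphere_log_norm_eq {g : ℂ → ℂ}
    (hf : AnalyticOnNhd ℂ f (closedBall 0 R)) (hg : Complex.ECanonicalDecomp f g R) (hR : 0 < R)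
    (hw : w ∈ closedBall 0 R) (hfw : f w ≠ 0) :
    ∀ᶠ z in codiscreteWithin (sphere (0 : ℂ) R), log ‖f z‖ =
      log ‖g z‖ + ∑ᶠ a, MeromorphicOn.divisor f (sphere 0 R) a * log ‖z - a‖ := by
  filter_upwards [eventually_codiscreteWithin_sphere_ne_zero hf hw hfw] with z ⟨hz, hfz⟩
  have hball : ∑ᶠ a, MeromorphicOn.divisor f (ball 0 R) a * log ‖canonicalFactor R a z‖ = 0 := by
    refine finsum_eq_zero_of_forall_eq_zero fun a ↦ ?_
    by_cases ha : a ∈ ball 0 R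
    · rw [Complex.norm_canonicalFactor_eval_circle_eq_one ha hz, log_one, mul_zero]
    · simp [ha]
  linarith [log_norm_ecanonicalDecomp hf hg hR (sphere_subset_closedBall hz) hfz]

theorem circleAverage_poissonKernel_smul_log_norm (hf : AnalyticOnNhd ℂ f (closedBall 0 R))
    (hw : w ∈ ball 0 R) (hfw : f w ≠ 0) :
    circleAverage (poissonKernel 0 w • fun z ↦ log ‖f z‖) 0 R = log ‖f w‖ +
      ∑ᶠ a, MeromorphicOn.divisor f (ball 0 R) a * log ‖canonicalFactor R a w‖ := by
  have hR : 0 < R := pos_of_mem_ball hw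
  have hwR := ball_subset_closedBall hw
  obtain ⟨g, hg⟩ := exists_ecanonicalDecomp_of_ne_zero hf hwR hfw
  let u : ℂ → ℝ := fun z ↦ log ‖g z‖
  let v : ℂ → ℝ := fun z ↦ ∑ᶠ a, MeromorphicOn.divisor f (sphere 0 R) a * log ‖z - a‖
  have hu : InnerProductSpace.HarmonicOnNhd u (closedBall 0 R) := fun z hz ↦
    (hg.analyticOnNhd z hz).harmonicAt_log_norm (hg.ne_zero z hz)
  have hv : circleAverage (poissonKernel 0 w • v) 0 R = v w :=
    circleAverage_poissonKernel_smul_finsum_mul_log_norm_sub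
      (divisor_sphere_support_finite.subset fun a ha ↦ by simpa using ha)
      (fun a ha ↦ Function.locallyFinsuppWithin.supportWithinDomain _ (by simpa using ha)) hw
  have huint : CircleIntegrable u 0 R := ContinuousOn.circleIntegrable hR.le fun z hz ↦
    (hu z (sphere_subset_closedBall hz)).1.continuousAt.continuousWithinAt
  have hfint : CircleIntegrable (fun z ↦ log ‖f z‖) 0 R :=
    MeromorphicOn.circleIntegrable_log_norm_of_nonneg
      (hf.mono sphere_subset_closedBall).meromorphicOn hR.le
  have hsub : v w = circleAverage (poissonKernel 0 w • fun z ↦ log ‖f z‖) 0 R - u w := by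
    rw [← hv, ← hu.circleAverage_poissonKernel_smul hw,
      ← circleAverage_sub (circleIntegrable_poissonKernel_smul hfint hw)
        (circleIntegrable_poissonKernel_smul huint hw)]
    refine circleAverage_congr_codiscreteWithin ?_ hR.ne'
    rw [abs_of_pos hR]
    filter_upwards [eventually_codiscreteWithin_sphere_log_norm_eq hf hg hR hwR hfw] with z hz
    simp [u, v, hz, mul_add]
  have := log_norm_ecanonicalDecomp hf hg hR hwR hfw
  simp only [u, v] at hsub
  linarith

theorem log_norm_le_circleAverage_poissonKernel_smul (hf : AnalyticOnNhd ℂ f (closedBall 0 R))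
    (hw : w ∈ ball 0 R) (hfw : f w ≠ 0) :
    log ‖f w‖ ≤ circleAverage (poissonKernel 0 w • fun z ↦ log ‖f z‖) 0 R := by
  rw [circleAverage_poissonKernel_smul_log_norm hf hw hfw, le_add_iff_nonneg_right]
  refine finsum_nonneg fun a ↦ ?_
  by_cases ha : a ∈ ball 0 R
  · have hdiv : 0 ≤ MeromorphicOn.divisor f (ball 0 R) a :=
      MeromorphicOn.AnalyticOnNhd.divisor_nonneg (hf.mono ball_subset_closedBall) a
    rcases eq_or_ne w a with rfl | hne
    · simp
    · exact mul_nonneg (by exact_mod_cast hdiv) (log_nonneg (one_le_norm_canonicalFactor ha hw hne))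
  · simp [ha]

end PoissonJensen

section Harnack

variable {f : ℂ → ℂ} {u : ℂ → ℝ} {R : ℝ} {c w : ℂ}

theorem circleAverage_poissonKernel_smul_le (hu : CircleIntegrable u c R) (hw : w ∈ ball c R)
    (hu0 : ∀ z ∈ sphere c R, 0 ≤ u z) :
    circleAverage (poissonKernel c w • u) c R ≤
      (R + ‖w - c‖) / (R - ‖w - c‖) * circleAverage u c R := by
  rw [← smul_eq_mul, ← circleAverage_smul]
  refine circleAverage_mono (circleIntegrable_poissonKernel_smul hu hw) hu.const_smul fun z hz ↦ ?_
  rw [abs_of_pos (pos_of_mem_ball hw)] at hz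
  rw [poissonKernel_eq_re_herglotzRieszKernel]
  exact mul_le_mul_of_nonneg_right (re_herglotzRieszKernel_le hz hw) (hu0 z hz)

theorem circleAverage_poissonKernel_smul_le_of_nonpos (hu : CircleIntegrable u c R)
    (hw : w ∈ ball c R) (hu0 : ∀ z ∈ sphere c R, u z ≤ 0) :
    circleAverage (poissonKernel c w • u) c R ≤
      (R - ‖w - c‖) / (R + ‖w - c‖) * circleAverage u c R := by
  rw [← smul_eq_mul, ← circleAverage_smul]
  refine circleAverage_mono (circleIntegrable_poissonKernel_smul hu hw) hu.const_smul fun z hz ↦ ?_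
  rw [abs_of_pos (pos_of_mem_ball hw)] at hz
  rw [poissonKernel_eq_re_herglotzRieszKernel]
  exact mul_le_mul_of_nonpos_right (le_re_herglotzRieszKernel hz hw) (hu0 z hz)

theorem posLog_norm_le_mul_circleAverage_posLog_norm (hf : AnalyticOnNhd ℂ f (closedBall 0 R))
    (hw : w ∈ ball 0 R) :
    log⁺ ‖f w‖ ≤ (R + ‖w‖) / (R - ‖w‖) * circleAverage (fun z ↦ log⁺ ‖f z‖) 0 R := by
  have hwR : ‖w‖ < R := by simpa using hw
  have hR : 0 < R := pos_of_mem_ball hw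
  have hmer : MeromorphicOn f (sphere 0 R) := (hf.mono sphere_subset_closedBall).meromorphicOn
  have hint : CircleIntegrable (fun z ↦ log⁺ ‖f z‖) 0 R :=
    hmer.circleIntegrable_posLog_norm_of_nonneg hR.le
  have hright : 0 ≤ (R + ‖w‖) / (R - ‖w‖) * circleAverage (fun z ↦ log⁺ ‖f z‖) 0 R :=
    mul_nonneg (div_nonneg (by positivity) (by linarith))
      (circleAverage_nonneg_of_nonneg fun _ _ ↦ posLog_nonneg)
  refine max_le hright ?_
  rcases eq_or_ne (f w) 0 with hfw | hfw
  · simpa [hfw] using hright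
  calc log ‖f w‖ ≤ circleAverage (poissonKernel 0 w • fun z ↦ log ‖f z‖) 0 R :=
        log_norm_le_circleAverage_poissonKernel_smul hf hw hfw
    _ ≤ circleAverage (poissonKernel 0 w • fun z ↦ log⁺ ‖f z‖) 0 R := by
        refine circleAverage_mono (circleIntegrable_poissonKernel_smul
          (hmer.circleIntegrable_log_norm_of_nonneg hR.le) hw)
          (circleIntegrable_poissonKernel_smul hint hw) fun z hz ↦ ?_
        rw [abs_of_pos hR] at hz
        rw [poissonKernel_eq_re_herglotzRieszKernel]
        refine mul_le_mul_of_nonneg_left (le_max_right _ _) (le_trans ?_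
          (le_re_herglotzRieszKernel hz hw))
        exact div_nonneg (by simpa using hwR.le) (by positivity)
    _ ≤ _ := by
        simpa using circleAverage_poissonKernel_smul_le hint hw fun _ _ ↦ posLog_nonneg

theorem log_norm_le_mul_circleAverage_log_norm (hf : AnalyticOnNhd ℂ f (closedBall 0 R))
    (hf1 : ∀ z ∈ sphere 0 R, ‖f z‖ ≤ 1) (hw : w ∈ ball 0 R) (hfw : f w ≠ 0) :
    log ‖f w‖ ≤ (R - ‖w‖) / (R + ‖w‖) * circleAverage (fun z ↦ log ‖f z‖) 0 R := by
  refine (log_norm_le_circleAverage_poissonKernel_smul hf hw hfw).trans ?_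
  simpa using circleAverage_poissonKernel_smul_le_of_nonpos
    (MeromorphicOn.circleIntegrable_log_norm_of_nonneg
      (hf.mono sphere_subset_closedBall).meromorphicOn (pos_of_mem_ball hw).le) hw
    fun z hz ↦ log_nonpos (norm_nonneg _) (hf1 z hz)

end Harnack

section Jensen

variable {f : ℂ → ℂ} {c : ℂ} {r R : ℝ} {p : ℕ}

open scoped Classical in
theorem divisor_eq_ite_of_deriv_ne_zero {U : Set ℂ} (hf : AnalyticOnNhd ℂ f U)
    (hsimple : ∀ z ∈ U, f z = 0 → deriv f z ≠ 0) (z : ℂ) :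
    MeromorphicOn.divisor f U z = if z ∈ U ∧ f z = 0 then 1 else 0 := by
  by_cases hz : z ∈ U
  · rw [MeromorphicOn.AnalyticOnNhd.divisor_apply hf hz]
    by_cases hfz : f z = 0
    · have horder := (hf z hz).analyticOrderAt_sub_eq_one_of_deriv_ne_zero (hsimple z hz hfz)
      simp only [hfz, sub_zero] at horder
      simp [horder, hz, hfz]
    · simp [(hf z hz).analyticOrderAt_eq_zero.mpr hfz, hfz]
  · simp [hz]

theorem circleAverage_log_norm_le_of_encard_zeros_le (hf : AnalyticOnNhd ℂ f (closedBall c R))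
    (hr : 0 < r) (hrR : r ≤ R) (hball : ∀ z ∈ ball c r, f z ≠ 0)
    (hsimple : ∀ z ∈ closedBall c R, f z = 0 → deriv f z ≠ 0)
    (hcard : {z ∈ closedBall c R | f z = 0}.encard ≤ p) :
    circleAverage (fun z ↦ log ‖f z‖) c R ≤ p * log (R / r) + log ‖f c‖ := by
  have hR : 0 < R := hr.trans_le hrR
  have hfin : {z ∈ closedBall c R | f z = 0}.Finite := finite_of_encard_le_coe hcard
  have hcard' : hfin.toFinset.card ≤ p := by
    rwa [hfin.encard_eq_coe_toFinset_card, Nat.cast_le] at hcard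
  have hterm : ∀ z ∈ hfin.toFinset, log (R * ‖c - z‖⁻¹) ≤ log (R / r) := by
    intro z hz
    have hrz : r ≤ ‖c - z‖ := by
      rw [← dist_eq_norm, dist_comm]
      exact not_lt.mp fun h ↦ hball z h (hfin.mem_toFinset.mp hz).2
    have : 0 < ‖c - z‖ := hr.trans_le hrz
    rw [← div_eq_mul_inv]
    gcongr
  have hsum : ∑ᶠ z, MeromorphicOn.divisor f (closedBall c R) z * log (R * ‖c - z‖⁻¹) =
      ∑ z ∈ hfin.toFinset, log (R * ‖c - z‖⁻¹) := by
    simp only [divisor_eq_ite_of_deriv_ne_zero hf hsimple]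
    rw [finsum_eq_sum_of_support_subset (s := hfin.toFinset) _ (fun z ↦ by simp +contextual)]
    exact Finset.sum_congr rfl fun z hz ↦ by simp_all
  rw [AnalyticOnNhd.circleAverage_log_norm hR.ne' (by rwa [abs_of_pos hR])
    (hball c (mem_ball_self hr)), abs_of_pos hR, hsum]
  gcongr
  calc ∑ z ∈ hfin.toFinset, log (R * ‖c - z‖⁻¹)
      ≤ hfin.toFinset.card • log (R / r) := Finset.sum_le_card_nsmul _ _ _ hterm
    _ ≤ p * log (R / r) := by
        have : 0 ≤ log (R / r) := log_nonneg ((one_le_div hr).mpr hrR)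
        rw [nsmul_eq_mul]
        gcongr

theorem circleAverage_log_norm_le_log_add_circleAverage_posLog {m : ℝ} (hm : 0 < m)
    (hf : AnalyticOnNhd ℂ f (closedBall c R)) (hR : 0 < R) {z : ℂ} (hz : z ∈ closedBall c R)
    (hfz : f z ≠ 0) :
    circleAverage (fun z ↦ log ‖f z‖) c R ≤
      log m + circleAverage (fun z ↦ log⁺ (‖f z‖ / m)) c R := by
  have hint : CircleIntegrable (fun z ↦ log⁺ (‖f z‖ / m)) c R := by
    refine ContinuousOn.circleIntegrable hR.le (continuous_posLog.comp_continuousOn ?_)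
    exact (hf.continuousOn.mono sphere_subset_closedBall).norm.div_const m
  let u : ℂ → ℝ := fun z ↦ if f z = 0 then log m else log ‖f z‖
  have hu : (fun z ↦ log ‖f z‖) =ᶠ[codiscreteWithin (sphere c |R|)] u := by
    rw [abs_of_pos hR]
    filter_upwards [eventually_codiscreteWithin_sphere_ne_zero hf hz hfz] with z ⟨_, hfz⟩
    simp [u, hfz]
  have huint : CircleIntegrable u c R :=
    (MeromorphicOn.circleIntegrable_log_norm_of_nonneg
      (hf.mono sphere_subset_closedBall).meromorphicOn hR.le).congr_codiscreteWithin hu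
  rw [circleAverage_congr_codiscreteWithin hu hR.ne', ← circleAverage_const (log m) c R,
    ← circleAverage_fun_add (circleIntegrable_const _ _ _) hint]
  refine circleAverage_mono huint ((circleIntegrable_const _ _ _).add hint) fun z _ ↦ ?_
  by_cases hfz : f z = 0
  · simp [u, hfz]
  · have hlog : log (‖f z‖ / m) ≤ log⁺ (‖f z‖ / m) := le_max_right _ _
    rw [log_div (norm_ne_zero_iff.mpr hfz) hm.ne'] at hlog
    simp only [u, hfz, if_false]
    linarith

end Jensen

theorem norm_ofReal_inv_mul {m : ℝ} (hm : 0 < m) (z : ℂ) : ‖(m : ℂ)⁻¹ * z‖ = ‖z‖ / m := by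
  rw [norm_mul, norm_inv, Complex.norm_real, norm_of_nonneg hm.le, inv_mul_eq_div]

/-- `h` is `p`-valent on `s`: it takes every value at most `p` times there. Solutions are counted
without multiplicity, as in `SectionallyPValentOn`. -/
def PValentOn (h : ℂ → ℂ) (s : Set ℂ) (p : ℕ) : Prop :=
  ∀ a, {z ∈ s | h z = a}.encard ≤ p

namespace PValentOn

variable {h : ℂ → ℂ} {s t : Set ℂ} {c : ℂ} {r R M : ℝ} {p : ℕ}

theorem mono (hv : PValentOn h t p) (hst : s ⊆ t) : PValentOn h s p := fun a ↦ by
  refine (encard_le_encard ?_).trans (hv a)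
  exact fun z hz ↦ ⟨hst hz.1, hz.2⟩

theorem const_mul (hv : PValentOn h s p) {m : ℂ} (hm : m ≠ 0) :
    PValentOn (fun z ↦ m * h z) s p := fun a ↦ by
  simpa only [← eq_inv_mul_iff_mul_eq₀ hm] using hv (m⁻¹ * a)

theorem finite_fiber (hv : PValentOn h s p) (a : ℂ) : {z ∈ s | h z = a}.Finite :=
  finite_of_encard_le_coe (hv a)

theorem exists_ne (hv : PValentOn h s p) (hs : s.Infinite) (a : ℂ) : ∃ z ∈ s, h z ≠ a := by
  by_contra! hconst
  exact hs ((hv.finite_fiber a).subset fun z hz ↦ ⟨hz, hconst z hz⟩)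

theorem finite_deriv_eq_zero (hv : PValentOn h (closedBall c R) p)
    (hh : AnalyticOnNhd ℂ h (closedBall c R)) (hR : 0 < R) :
    {z ∈ closedBall c R | deriv h z = 0}.Finite := by
  by_contra hinf
  obtain ⟨x, hx, hacc⟩ := Set.Infinite.exists_accPt_of_subset_isCompact hinf
    (isCompact_closedBall c R) (sep_subset _ _)
  have hderiv : EqOn (deriv h) 0 (closedBall c R) :=
    hh.deriv.eqOn_zero_of_preconnected_of_frequently_eq_zero (convex_closedBall c R).isPreconnected
      hx ((accPt_iff_frequently_nhdsNE.mp hacc).mono fun z hz ↦ hz.2)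
  obtain ⟨a, ha⟩ := isOpen_ball.exists_is_const_of_deriv_eq_zero (convex_ball c R).isPreconnected
    (hh.mono ball_subset_closedBall).differentiableOn (hderiv.mono ball_subset_closedBall)
  obtain ⟨z, hz, hza⟩ := (hv.mono ball_subset_closedBall).exists_ne
    (infinite_of_mem_nhds c (ball_mem_nhds c hR)) a
  exact hza (ha z hz)

theorem circleAverage_log_norm_sub_le (hv : PValentOn h (closedBall c R) p)
    (hh : AnalyticOnNhd ℂ h (closedBall c R)) (hr : 0 < r) (hrR : r ≤ R)
    (hsmall : ∀ z ∈ ball c r, ‖h z‖ ≤ 1 / 2) {a : ℂ} (ha : ‖a‖ = 1)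
    (hcrit : ∀ z ∈ closedBall c R, deriv h z = 0 → h z ≠ a) :
    circleAverage (fun z ↦ log ‖h z - a‖) c R ≤ log 2 + p * log (R / r) := by
  have hne : ∀ z ∈ ball c r, h z - a ≠ 0 := fun z hz hza ↦ by
    have := hsmall z hz
    rw [sub_eq_zero.mp hza, ha] at this
    norm_num at this
  have hcenter : log ‖h c - a‖ ≤ log 2 := by
    have hc := mem_ball_self (x := c) hr
    refine log_le_log (norm_pos_iff.mpr (hne c hc)) ((norm_sub_le _ _).trans ?_)
    linarith [hsmall c hc]
  calc circleAverage (fun z ↦ log ‖h z - a‖) c R ≤ p * log (R / r) + log ‖h c - a‖ :=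
        circleAverage_log_norm_le_of_encard_zeros_le (hh.sub analyticOnNhd_const) hr hrR hne
          (fun z hz hza ↦ by
            rw [deriv_sub_const]
            exact fun hd ↦ hcrit z hz hd (sub_eq_zero.mp hza))
          (by simpa only [sub_eq_zero] using hv a)
    _ ≤ log 2 + p * log (R / r) := by linarith

theorem circleAverage_posLog_norm_le (hv : PValentOn h (closedBall c R) p)
    (hh : AnalyticOnNhd ℂ h (closedBall c R)) (hr : 0 < r) (hrR : r ≤ R)
    (hsmall : ∀ z ∈ ball c r, ‖h z‖ ≤ 1 / 2) :
    circleAverage (fun z ↦ log⁺ ‖h z‖) c R ≤ log 2 + p * log (R / r) := by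
  have hR : 0 < R := hr.trans_le hrR
  refine circleAverage_posLog_norm_le_of_circleAverage_log_norm_sub_le
    (hh.continuousOn.mono (by simpa only [abs_of_pos hR] using sphere_subset_closedBall))
    ((hv.finite_deriv_eq_zero hh hR).image h).countable fun a ha haS ↦ ?_
  exact hv.circleAverage_log_norm_sub_le hh hr hrR hsmall ha
    fun z hz hd hza ↦ haS ⟨z, ⟨hz, hd⟩, hza⟩

theorem pos_of_norm_le (hv : PValentOn h (closedBall c R) p) (hr : 0 < r) (hrR : r ≤ R)
    (hM : ∀ z ∈ ball c r, ‖h z‖ ≤ M) : 0 < M := by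
  obtain ⟨z, hz, hhz⟩ := (hv.mono (ball_subset_closedBall.trans
    (closedBall_subset_closedBall hrR))).exists_ne (infinite_of_mem_nhds c (ball_mem_nhds c hr)) 0
  exact (norm_pos_iff.mpr hhz).trans_le (hM z hz)

theorem circleAverage_posLog_norm_div_le (hv : PValentOn h (closedBall c R) p)
    (hh : AnalyticOnNhd ℂ h (closedBall c R)) (hr : 0 < r) (hrR : r ≤ R) (hM0 : 0 < M)
    (hM : ∀ z ∈ ball c r, ‖h z‖ ≤ M) :
    circleAverage (fun z ↦ log⁺ (‖h z‖ / (2 * M))) c R ≤ log 2 + p * log (R / r) := by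
  have hM2 : 0 < 2 * M := by positivity
  simp only [← norm_ofReal_inv_mul hM2]
  refine (hv.const_mul (inv_ne_zero (by exact_mod_cast hM2.ne'))).circleAverage_posLog_norm_le
    (analyticOnNhd_const.mul hh) hr hrR fun z hz ↦ ?_
  rw [norm_ofReal_inv_mul hM2, div_le_div_iff₀ hM2 two_pos]
  linarith [hM z hz]

theorem circleAverage_log_norm_le (hv : PValentOn h (closedBall c R) p)
    (hh : AnalyticOnNhd ℂ h (closedBall c R)) (hr : 0 < r) (hrR : r ≤ R)
    (hM : ∀ z ∈ ball c r, ‖h z‖ ≤ M) :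
    circleAverage (fun z ↦ log ‖h z‖) c R ≤ log (4 * M) + p * log (R / r) := by
  have hR : 0 < R := hr.trans_le hrR
  have hM0 : 0 < M := hv.pos_of_norm_le hr hrR hM
  obtain ⟨z, hz, hhz⟩ := hv.exists_ne (infinite_of_mem_nhds c (closedBall_mem_nhds c hR)) 0
  have hlog4 : log (4 * M) = log (2 * M) + log 2 := by
    rw [← log_mul (by positivity) two_ne_zero]
    ring_nf
  linarith [circleAverage_log_norm_le_log_add_circleAverage_posLog (m := 2 * M) (by positivity)
    hh hR hz hhz, hv.circleAverage_posLog_norm_div_le hh hr hrR hM0 hM]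

end PValentOn

/-- The constant of the doubling inequality for `p`-valent functions:
`log (doublingConstant p) = 5 log 2 + p log 2 + 27 (log 2 + p log (5/2))`, where
`9 (log 2 + p log (5/2))` bounds the growth from the disk of radius `1` to the disk of radius `2`
and `3` is the Harnack constant of those two disks. -/
def doublingConstant (p : ℕ) : ℝ :=
  2 ^ (32 + p) * (5 / 2) ^ (27 * p)

theorem one_le_doublingConstant (p : ℕ) : 1 ≤ doublingConstant p :=
  one_le_mul_of_one_le_of_one_le (one_le_pow₀ (by norm_num)) (one_le_pow₀ (by norm_num))

theorem one_le_doublingConstant_div_pow (p : ℕ) {ρ : ℝ} (hρ : 0 < ρ) (hρ1 : ρ ≤ 1) :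
    1 ≤ doublingConstant p / ρ ^ p := by
  rw [one_le_div (by positivity)]
  exact (pow_le_one₀ hρ.le hρ1).trans (one_le_doublingConstant p)

theorem log_doublingConstant_div_pow_mul (p : ℕ) {ρ M : ℝ} (hρ : 0 < ρ) (hM : 0 < M) :
    log (doublingConstant p / ρ ^ p * M) =
      (32 + p) * log 2 + 27 * (p * log (5 / 2)) - p * log ρ + log M := by
  rw [doublingConstant, log_mul (by positivity) hM.ne', log_div (by positivity) (by positivity),
    log_mul (by positivity) (by positivity), log_pow, log_pow, log_pow]
  push_cast
  ring

namespace PValentOn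

variable {h : ℂ → ℂ} {w : ℂ} {r R M : ℝ} {p : ℕ}

theorem norm_le_mul_exp (hv : PValentOn h (closedBall 0 R) p)
    (hh : AnalyticOnNhd ℂ h (closedBall 0 R)) (hr : 0 < r) (hrR : r ≤ R)
    (hM : ∀ z ∈ ball 0 r, ‖h z‖ ≤ M) (hw : w ∈ ball 0 R) :
    ‖h w‖ ≤ 2 * M * exp ((R + ‖w‖) / (R - ‖w‖) * (log 2 + p * log (R / r))) := by
  have hM0 : 0 < M := hv.pos_of_norm_le hr hrR hM
  have hM2 : 0 < 2 * M := by positivity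
  have hwR : ‖w‖ < R := by simpa using hw
  have hharnack := posLog_norm_le_mul_circleAverage_posLog_norm
    ((analyticOnNhd_const (v := ((2 * M : ℝ) : ℂ)⁻¹)).mul hh) hw
  simp only [norm_ofReal_inv_mul hM2] at hharnack
  have hratio : 0 ≤ (R + ‖w‖) / (R - ‖w‖) :=
    div_nonneg (by linarith [norm_nonneg w]) (by linarith)
  rw [mul_comm (2 * M), ← div_le_iff₀ hM2]
  rcases eq_or_ne (h w) 0 with hhw | hhw
  · simpa [hhw] using (exp_pos _).le
  rw [← log_le_iff_le_exp (by positivity)]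
  calc log (‖h w‖ / (2 * M)) ≤ log⁺ (‖h w‖ / (2 * M)) := le_max_right _ _
    _ ≤ _ := hharnack.trans <| mul_le_mul_of_nonneg_left
        (hv.circleAverage_posLog_norm_div_le hh hr hrR hM0 hM) hratio

theorem log_norm_div_le {B : ℝ} (hv : PValentOn h (closedBall 0 R) p)
    (hh : AnalyticOnNhd ℂ h (closedBall 0 R)) (hr : 0 < r) (hrR : r ≤ R)
    (hM : ∀ z ∈ ball 0 r, ‖h z‖ ≤ M) (hB0 : 0 < B) (hB : ∀ z ∈ sphere 0 R, ‖h z‖ ≤ B)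
    (hw : w ∈ ball 0 R) (hhw : h w ≠ 0) :
    log (‖h w‖ / B) ≤
      (R - ‖w‖) / (R + ‖w‖) * (log (4 * M / B) + p * log (R / r)) := by
  have hwR : ‖w‖ < R := by simpa using hw
  have hB' : ((B : ℂ))⁻¹ ≠ 0 := inv_ne_zero (by exact_mod_cast hB0.ne')
  have hh' : AnalyticOnNhd ℂ (fun z ↦ (B : ℂ)⁻¹ * h z) (closedBall 0 R) :=
    analyticOnNhd_const.mul hh
  have hharnack := log_norm_le_mul_circleAverage_log_norm hh' (fun z hz ↦ by
    rw [norm_ofReal_inv_mul hB0]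
    exact (div_le_one hB0).mpr (hB z hz)) hw (mul_ne_zero hB' hhw)
  have haverage := (hv.const_mul hB').circleAverage_log_norm_le hh' (M := M / B) hr hrR
    fun z hz ↦ by
      rw [norm_ofReal_inv_mul hB0]
      exact div_le_div_of_nonneg_right (hM z hz) hB0.le
  rw [norm_ofReal_inv_mul hB0] at hharnack
  rw [mul_div_assoc]
  exact hharnack.trans <| mul_le_mul_of_nonneg_left haverage <|
    div_nonneg (by linarith) (by linarith [norm_nonneg w])

theorem norm_le_mul_exp_of_mem_closedBall_two (hv : PValentOn h (closedBall 0 (5 / 2)) p)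
    (hh : AnalyticOnNhd ℂ h (closedBall 0 (5 / 2))) (hM : ∀ z ∈ ball 0 1, ‖h z‖ ≤ M)
    (hw : w ∈ closedBall 0 2) :
    ‖h w‖ ≤ 2 * M * exp (9 * (log 2 + p * log (5 / 2))) := by
  have hM0 : 0 < M := hv.pos_of_norm_le one_pos (by norm_num) hM
  have hw2 : ‖w‖ ≤ 2 := by simpa using hw
  have hgrowth := hv.norm_le_mul_exp hh one_pos (by norm_num) hM
    (closedBall_subset_ball (by norm_num) hw)
  rw [div_one] at hgrowth
  refine hgrowth.trans ?_
  gcongr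
  rw [div_le_iff₀ (by linarith)]
  linarith

theorem three_mul_log_norm_le {B : ℝ} (hv : PValentOn h (closedBall 0 2) p)
    (hh : AnalyticOnNhd ℂ h (closedBall 0 2)) (hr : 0 < r) (hr2 : r ≤ 2)
    (hM : ∀ z ∈ ball 0 r, ‖h z‖ ≤ M) (hB : ∀ z ∈ closedBall 0 2, ‖h z‖ ≤ B)
    (hw : w ∈ closedBall 0 1) (hhw : h w ≠ 0) :
    3 * log ‖h w‖ ≤ 2 * log B + log (4 * M) + p * log (2 / r) := by
  have hw1 : ‖w‖ ≤ 1 := by simpa using hw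
  have hM0 : 0 < M := hv.pos_of_norm_le hr hr2 hM
  have hwB : ‖h w‖ ≤ B := hB w (closedBall_subset_closedBall one_le_two hw)
  have hB0 : 0 < B := (norm_pos_iff.mpr hhw).trans_le hwB
  have hharnack := hv.log_norm_div_le hh hr hr2 hM hB0
    (fun z hz ↦ hB z (sphere_subset_closedBall hz)) (closedBall_subset_ball one_lt_two hw) hhw
  rw [div_mul_eq_mul_div, le_div_iff₀ (by positivity), log_div (norm_ne_zero_iff.mpr hhw) hB0.ne',
    log_div (by positivity) hB0.ne'] at hharnack
  have hlogB : log ‖h w‖ ≤ log B := log_le_log (norm_pos_iff.mpr hhw) hwB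
  nlinarith

theorem norm_le_doublingConstant_div_pow_mul (hv : PValentOn h (closedBall 0 (5 / 2)) p)
    (hh : AnalyticOnNhd ℂ h (closedBall 0 (5 / 2))) (hr : 0 < r) (hr1 : r ≤ 1)
    (hM : ∀ z ∈ ball 0 r, ‖h z‖ ≤ M) (hw : w ∈ closedBall 0 2) :
    ‖h w‖ ≤ doublingConstant p / r ^ p * M := by
  have h2 : closedBall (0 : ℂ) 2 ⊆ closedBall 0 (5 / 2) :=
    closedBall_subset_closedBall (by norm_num)
  have hM0 : 0 < M := hv.pos_of_norm_le hr (by linarith) hM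
  obtain ⟨t, ht, hmax⟩ := (isCompact_closedBall (0 : ℂ) 1).exists_isMaxOn ⟨0, by simp⟩
    (hh.continuousOn.mono (closedBall_subset_closedBall (by norm_num))).norm
  have hball : ∀ z ∈ ball 0 1, ‖h z‖ ≤ ‖h t‖ := fun z hz ↦ hmax (ball_subset_closedBall hz)
  have ht0 : 0 < ‖h t‖ := hv.pos_of_norm_le one_pos (by norm_num) hball
  set B : ℝ := 2 * ‖h t‖ * exp (9 * (log 2 + p * log (5 / 2))) with hBdef
  have hB0 : 0 < B := by positivity
  have hB : ∀ z ∈ closedBall 0 2, ‖h z‖ ≤ B := fun z hz ↦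
    hv.norm_le_mul_exp_of_mem_closedBall_two hh hball hz
  have hlogB : log B = log 2 + log ‖h t‖ + 9 * (log 2 + p * log (5 / 2)) := by
    rw [hBdef, log_mul (by positivity) (exp_pos _).ne', log_mul two_ne_zero ht0.ne', log_exp]
  have hthree := (hv.mono h2).three_mul_log_norm_le (hh.mono h2) hr (by linarith) hM hB ht
    (norm_pos_iff.mp ht0)
  have hlog4 : log (4 * M) = 2 * log 2 + log M := by
    rw [log_mul (by norm_num) hM0.ne', show (4 : ℝ) = 2 ^ 2 by norm_num, log_pow]
    norm_num
  rw [hlog4, log_div two_ne_zero hr.ne'] at hthree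
  refine (hB w hw).trans ((log_le_log_iff hB0 ?_).mp ?_)
  · have := one_le_doublingConstant_div_pow p hr hr1
    positivity
  · rw [log_doublingConstant_div_pow_mul p hr hM0]
    linarith

end PValentOn

end PValentFunctions

namespace SectionallyPValentOn

variable {n p : ℕ} {g : EuclideanSpace ℂ (Fin n) → ℂ} {s t : Set (EuclideanSpace ℂ (Fin n))}
  {a b c x : EuclideanSpace ℂ (Fin n)} {r R M : ℝ}

theorem mono (hv : SectionallyPValentOn g t p) (hst : s ⊆ t) : SectionallyPValentOn g s p :=
  fun a b hb v T hT ↦ hv a b hb v T fun z hz ↦ ⟨hst (hT z hz).1, (hT z hz).2⟩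

theorem pValentOn_comp_line (hv : SectionallyPValentOn g s p) (hb : b ≠ 0) :
    PValentOn (fun z : ℂ ↦ g (a + z • b)) {z | a + z • b ∈ s} p := fun v ↦ by
  by_contra! hlt
  obtain ⟨T, hT, hcard⟩ := exists_subset_encard_eq (Order.add_one_le_of_lt hlt)
  have hfin : T.Finite := finite_of_encard_eq_coe (k := p + 1) (by exact_mod_cast hcard)
  have hle := hv a b hb v hfin.toFinset fun z hz ↦ hT (hfin.mem_toFinset.mp hz)
  rw [hfin.encard_eq_coe_toFinset_card] at hcard
  have : hfin.toFinset.card = p + 1 := by exact_mod_cast hcard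
  omega

theorem norm_le_doublingConstant_div_pow_mul (hv : SectionallyPValentOn g (closedBall c (5 / 2)) p)
    (hg : AnalyticOnNhd ℂ g (closedBall c (5 / 2))) (hr : 0 < r) (hr1 : r ≤ 1)
    (hM : ∀ y ∈ ball c r, ‖g y‖ ≤ M) (hx : x ∈ closedBall c 2) :
    ‖g x‖ ≤ doublingConstant p / r ^ p * M := by
  rcases eq_or_ne x c with rfl | hxc
  · have hgx : ‖g x‖ ≤ M := hM x (mem_ball_self hr)
    exact hgx.trans (le_mul_of_one_le_left ((norm_nonneg _).trans hgx)
      (one_le_doublingConstant_div_pow p hr hr1))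
  let b : EuclideanSpace ℂ (Fin n) := ((‖x - c‖ : ℂ))⁻¹ • (x - c)
  have hb : ‖b‖ = 1 := norm_smul_inv_norm (sub_ne_zero.mpr hxc)
  have hline (z : ℂ) : ‖c + z • b - c‖ = ‖z‖ := by
    rw [add_sub_cancel_left, norm_smul, hb, mul_one]
  have hmaps : closedBall 0 (5 / 2) ⊆ {z : ℂ | c + z • b ∈ closedBall c (5 / 2)} := fun z hz ↦ by
    rwa [mem_ofPred_eq, mem_closedBall_iff_norm, hline, ← mem_closedBall_zero_iff]
  have hx_line : c + (‖x - c‖ : ℂ) • b = x := by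
    rw [smul_inv_smul₀ (by exact_mod_cast norm_ne_zero_iff.mpr (sub_ne_zero.mpr hxc)),
      add_sub_cancel]
  have hdoubling := ((hv.pValentOn_comp_line (norm_ne_zero_iff.mp (hb ▸ one_ne_zero))).mono
    hmaps).norm_le_doublingConstant_div_pow_mul
    (hg.comp (fun z _ ↦ by fun_prop) hmaps) hr hr1
    (fun z hz ↦ hM _ (by rwa [mem_ball_iff_norm, hline, ← mem_ball_zero_iff]))
    (w := (‖x - c‖ : ℂ)) (by simpa [dist_eq_norm] using hx)
  rwa [hx_line] at hdoubling

end SectionallyPValentOn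

namespace DoublingCovering

variable {n N p L : ℕ} {G Y Ω T : Set (EuclideanSpace ℂ (Fin N))} {U : DoublingCovering n N G Y}
  {f : EuclideanSpace ℂ (Fin N) → ℂ} {ρ M : ℝ} {z : EuclideanSpace ℂ (Fin N)}

theorem bddAbove_norm_image (hf : ∀ j, ContinuousOn (f ∘ U.psi j) (closedBall 0 1)) :
    BddAbove ((fun v ↦ ‖f v‖) '' G) := by
  have hcompact : IsCompact (⋃ j, (fun x ↦ ‖(f ∘ U.psi j) x‖) '' closedBall 0 1) :=
    isCompact_iUnion fun j ↦ (isCompact_closedBall 0 1).image_of_continuousOn (hf j).norm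
  refine hcompact.bddAbove.mono ?_
  rintro _ ⟨v, hv, rfl⟩
  obtain ⟨j, x, hx, rfl⟩ := mem_iUnion.mp (U.covers hv)
  exact mem_iUnion.mpr ⟨j, x, ball_subset_closedBall hx, rfl⟩

theorem norm_le_of_mem_chart_of_radGe {j : Fin U.kappa}
    (hf : AnalyticOnNhd ℂ (f ∘ U.psi j) (ball (0 : EuclideanSpace ℂ (Fin n)) 4))
    (hv : SectionallyPValentOn (f ∘ U.psi j) (ball (0 : EuclideanSpace ℂ (Fin n)) 4) p)
    (hρ : 0 < ρ) (hρ1 : ρ ≤ 1) (hT : U.RadGe j T ρ) (hM : ∀ v ∈ T, ‖f v‖ ≤ M)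
    (hz : z ∈ U.chart j) : ‖f z‖ ≤ doublingConstant p / ρ ^ p * M := by
  obtain ⟨c, hc⟩ := hT
  obtain ⟨x, hx, rfl⟩ := hz
  have hc1 : ‖c‖ < 1 := by simpa using (hc (mem_ball_self hρ)).1
  have hx1 : ‖x‖ < 1 := by simpa using hx
  have hsub : closedBall c (5 / 2) ⊆ ball 0 4 := fun y hy ↦ by
    rw [mem_closedBall_iff_norm] at hy
    rw [mem_ball_zero_iff]
    linarith [norm_le_norm_add_norm_sub' y c]
  refine (hv.mono hsub).norm_le_doublingConstant_div_pow_mul (hf.mono hsub) hρ hρ1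
    (fun y hy ↦ hM _ (hc hy).2.2) ?_
  rw [mem_closedBall_iff_norm]
  linarith [norm_sub_le x c]

theorem ChainFrom.norm_le (hchain : U.ChainFrom Ω ρ L z)
    (hf : ∀ j, AnalyticOnNhd ℂ (f ∘ U.psi j) (ball (0 : EuclideanSpace ℂ (Fin n)) 4))
    (hv : ∀ j, SectionallyPValentOn (f ∘ U.psi j) (ball (0 : EuclideanSpace ℂ (Fin n)) 4) p)
    (hρ : 0 < ρ) (hρ1 : ρ ≤ 1) (hM0 : 0 ≤ M) (hM : ∀ v ∈ Ω, ‖f v‖ ≤ M) :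
    ‖f z‖ ≤ (doublingConstant p / ρ ^ p) ^ L * M := by
  obtain ⟨l, hl, js, hlL, -, hfirst, hnext, hlast⟩ := hchain
  have hcharts (m : ℕ) (hm : m < l) : ∀ v ∈ U.chart (js ⟨m, hm⟩),
      ‖f v‖ ≤ (doublingConstant p / ρ ^ p) ^ (m + 1) * M := by
    induction m with
    | zero =>
      intro v hvm
      rw [zero_add, pow_one]
      exact norm_le_of_mem_chart_of_radGe (hf _) (hv _) hρ hρ1 hfirst hM hvm
    | succ m ih =>
      intro v hvm
      rw [pow_succ', mul_assoc]
      exact norm_le_of_mem_chart_of_radGe (hf _) (hv _) hρ hρ1 (hnext m hm).2 (ih (by omega)) hvm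
  calc ‖f z‖ ≤ (doublingConstant p / ρ ^ p) ^ (l - 1 + 1) * M := hcharts _ _ z hlast
    _ ≤ (doublingConstant p / ρ ^ p) ^ L * M := by
        gcongr
        · exact one_le_doublingConstant_div_pow p hρ hρ1
        · omega

end DoublingCovering

theorem doubling_inequality_on_manifold_general {p n N : ℕ} {G Y : Set (EuclideanSpace ℂ (Fin N))}
    (U : DoublingCovering n N G Y) {f : EuclideanSpace ℂ (Fin N) → ℂ}
    (hf : ∀ j, AnalyticOnNhd ℂ (f ∘ U.psi j) (ball (0 : EuclideanSpace ℂ (Fin n)) 4))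
    (hv : ∀ j, SectionallyPValentOn (f ∘ U.psi j) (ball (0 : EuclideanSpace ℂ (Fin n)) 4) p)
    {Ω : Set (EuclideanSpace ℂ (Fin N))} (hΩG : Ω ⊆ G) {ρ : ℝ} (hρ : 0 < ρ) (hρ1 : ρ ≤ 1)
    {L : ℕ} (hL : L ≤ U.kappa) (hchain : ∀ z ∈ G, U.ChainFrom Ω ρ L z) :
    sSup ((fun v ↦ ‖f v‖) '' G) ≤
        (doublingConstant p / ρ ^ p) ^ L * sSup ((fun v ↦ ‖f v‖) '' Ω) ∧
      (doublingConstant p / ρ ^ p) ^ L * sSup ((fun v ↦ ‖f v‖) '' Ω) ≤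
        (doublingConstant p / ρ ^ p) ^ U.kappa * sSup ((fun v ↦ ‖f v‖) '' Ω) := by
  have hK := one_le_doublingConstant_div_pow p hρ hρ1
  have hbdd : BddAbove ((fun v ↦ ‖f v‖) '' G) := DoublingCovering.bddAbove_norm_image fun j ↦
    (hf j).continuousOn.mono (closedBall_subset_ball (by norm_num))
  have hsup0 : 0 ≤ sSup ((fun v ↦ ‖f v‖) '' Ω) := Real.sSup_nonneg (by
    rintro _ ⟨v, -, rfl⟩
    exact norm_nonneg _)
  have hsup (v) (hvΩ : v ∈ Ω) : ‖f v‖ ≤ sSup ((fun v ↦ ‖f v‖) '' Ω) :=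
    le_csSup (hbdd.mono (image_mono hΩG)) (mem_image_of_mem _ hvΩ)
  constructor
  · refine Real.sSup_le ?_ (by positivity)
    rintro _ ⟨z, hz, rfl⟩
    exact (hchain z hz).norm_le hf hv hρ hρ1 hsup0 hsup
  · gcongr

/-- Simple form of the doubling inequality on a complex manifold covered by a doubling
covering: for every `p ≥ 1` there is `c_p ≥ 1` such that if `f` is analytic and sectionally
`p`-valent in all the charts of a doubling covering `𝒰` of `G`, `Ω ⊆ G` is compact,
`0 < ρ ≤ 1`, and every point of `G` is reached from `Ω` by a chain of at most
`ℓ(𝒰) ≤ κ(𝒰)` charts with all the relevant radii at least `ρ`, then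
`sup_G |f| ≤ (c_p/ρ^p)^{ℓ(𝒰)} sup_Ω |f| ≤ (c_p/ρ^p)^{κ(𝒰)} sup_Ω |f|`. -/
theorem doubling_inequality_on_manifold (p : ℕ) (hp : 1 ≤ p) :
    ∃ c : ℝ, 1 ≤ c ∧
      ∀ (n N : ℕ) (G Y : Set (EuclideanSpace ℂ (Fin N)))
        (U : DoublingCovering n N G Y), IsCompact G →
      ∀ f : EuclideanSpace ℂ (Fin N) → ℂ,
        (∀ j, AnalyticOnNhd ℂ (f ∘ U.psi j) (ball (0 : EuclideanSpace ℂ (Fin n)) 4)) →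
        (∀ j, SectionallyPValentOn (f ∘ U.psi j) (ball (0 : EuclideanSpace ℂ (Fin n)) 4) p) →
      ∀ Ω : Set (EuclideanSpace ℂ (Fin N)), IsCompact Ω → Ω ⊆ G →
      ∀ ρ : ℝ, 0 < ρ → ρ ≤ 1 →
      ∀ L : ℕ, 1 ≤ L → L ≤ U.kappa →
        (∀ z ∈ G, U.ChainFrom Ω ρ L z) →
        sSup ((fun v => ‖f v‖) '' G) ≤ (c / ρ ^ p) ^ L * sSup ((fun v => ‖f v‖) '' Ω) ∧
        (c / ρ ^ p) ^ L * sSup ((fun v => ‖f v‖) '' Ω) ≤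
          (c / ρ ^ p) ^ U.kappa * sSup ((fun v => ‖f v‖) '' Ω) := by
  exact ⟨doublingConstant p, one_le_doublingConstant p,
    fun _ _ _ _ U _ _ hf hv _ _ hΩG _ hρ hρ1 _ _ hL hchain ↦
      doubling_inequality_on_manifold_general U hf hv hΩG hρ hρ1 hL hchain⟩
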